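/- For every real number q > 1/2, ∫₀¹ (x^{3q−2} + 1)·log(x^q + 1)/(x^{3q} + 1) dx = (1/(36q))·(ψ'((6q−1)/(6q)) − ψ'((3q−1)/(6q))) + (1/q)·Σ_{n=0}^{∞} 3^n·Γ(n + 3 − 1/q)·Γ(n + 1/q)/(2n+2)! · (ψ(2n + 3) − ψ(n + 3 − 1/q)). -/

import Mathlib

/-- The digamma function ψ(x) = Γ'(x)/Γ(x). -/
noncomputable def digamma (x : ℝ) : ℝ := deriv Real.Gamma x / Real.Gamma x

/-- The trigamma function ψ'(x), the derivative of the digamma function. -/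
noncomputable def trigamma (x : ℝ) : ℝ := deriv digamma x

/-!
Folding the part of `∫₀^∞ log(x^q + 1) / (x^{3q} + 1) dx` over `(1, ∞)` back to `(0, 1)` by
`x ↦ x⁻¹` shows that the integral in question is this one plus
`q ∫₀¹ x^{3q-2} log x / (x^{3q} + 1) dx`. Expanding `1 / (x^{3q} + 1)` turns the latter into an
alternating series of inverse squares, a difference of two trigamma values.

With `t = x^q`, the half-line integral is `a ∫₀^∞ t^{a-1} log(1 + t) / (1 + t³) dt` for `a = 1/q`.
Since `1 + t³ = (1 + t)³ (1 - r)` with `r = 3t / (1 + t)² ≤ 3/4`, the integrand is a geometric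
series in `r`, and its `n`-th term is minus the derivative with respect to `c`, at `c = 2n + 3`, of
the Beta integral `∫₀^∞ t^{s-1} (1 + t)^{-c} dt = Γ(s) Γ(c - s) / Γ(c)` with `s = n + a`, up to the
factor `3^n`.
-/

open MeasureTheory Set Filter Topology Real

section Digamma

lemma hasDerivAt_Gamma_of_pos {x : ℝ} (hx : 0 < x) :
    HasDerivAt Gamma (Gamma x * digamma x) x := by
  rw [digamma, mul_div_cancel₀ _ (Gamma_pos_of_pos hx).ne']
  exact (differentiableAt_Gamma fun m => by linarith [m.cast_nonneg (α := ℝ)]).hasDerivAt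

lemma digamma_add_one {x : ℝ} (hx : 0 < x) : digamma (x + 1) = digamma x + 1 / x := by
  have hshift : HasDerivAt (fun y => Gamma (y + 1)) (Gamma (x + 1) * digamma (x + 1)) x :=
    (hasDerivAt_Gamma_of_pos (by positivity)).comp_add_const x 1
  have hmul : HasDerivAt (fun y => y * Gamma y) (1 * Gamma x + x * (Gamma x * digamma x)) x :=
    (hasDerivAt_id x).mul (hasDerivAt_Gamma_of_pos hx)
  have heq : (fun y => Gamma (y + 1)) =ᶠ[𝓝 x] fun y => y * Gamma y := by
    filter_upwards [lt_mem_nhds hx] with y hy using Gamma_add_one hy.ne'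
  have hderiv := hshift.unique (hmul.congr_of_eventuallyEq heq)
  rw [Gamma_add_one hx.ne'] at hderiv
  have hΓ := (Gamma_pos_of_pos hx).ne'
  field_simp at hderiv ⊢
  linarith

lemma digamma_add_natCast {x : ℝ} (hx : 0 < x) (N : ℕ) :
    digamma (x + N) = digamma x + ∑ n ∈ Finset.range N, 1 / (x + n) := by
  induction N with
  | zero => simp
  | succ N ih =>
    rw [Finset.sum_range_succ, ← add_assoc, ← ih, Nat.cast_succ, ← add_assoc,
      digamma_add_one (by positivity)]

lemma monotoneOn_digamma : MonotoneOn digamma (Ioi 0) := by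
  have hlog : ∀ x ∈ Ioi (0 : ℝ), HasDerivAt (log ∘ Gamma) (digamma x) x := fun x hx => by
    have hΓ := (Gamma_pos_of_pos hx).ne'
    simpa [Function.comp_def, hΓ] using (hasDerivAt_Gamma_of_pos hx).log hΓ
  exact (convexOn_log_Gamma.monotoneOn_deriv fun x hx => (hlog x hx).differentiableAt).congr
    fun x hx => (hlog x hx).deriv

lemma tendsto_digamma_natCast_add_sub {x : ℝ} (hx : 0 ≤ x) :
    Tendsto (fun N : ℕ => digamma (N + x) - digamma N) atTop (𝓝 0) := by
  have hsum : Tendsto (fun N : ℕ => ∑ n ∈ Finset.range ⌈x⌉₊, 1 / ((N : ℝ) + n)) atTop (𝓝 0) := by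
    rw [← Finset.sum_const_zero (s := Finset.range ⌈x⌉₊)]
    exact tendsto_finsetSum _ fun n _ => tendsto_const_nhds.div_atTop
      (tendsto_atTop_add_const_right _ (n : ℝ) tendsto_natCast_atTop_atTop)
  refine tendsto_of_tendsto_of_tendsto_of_le_of_le' tendsto_const_nhds hsum ?_ ?_ <;>
    filter_upwards [eventually_gt_atTop 0] with N hN
  all_goals have hN' : (0 : ℝ) < N := by exact_mod_cast hN
  · exact sub_nonneg.2 (monotoneOn_digamma hN' (add_pos_of_pos_of_nonneg hN' hx) (by linarith))
  · rw [sub_le_iff_le_add', ← digamma_add_natCast hN']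
    refine monotoneOn_digamma (add_pos_of_pos_of_nonneg hN' hx) ?_ ?_
    · exact mem_Ioi.2 (by positivity)
    · gcongr
      exact Nat.le_ceil x

lemma hasSum_digamma_sub {x y : ℝ} (hx : 0 < x) (hy : 0 < y) :
    HasSum (fun n : ℕ => 1 / (x + n) - 1 / (y + n)) (digamma y - digamma x) := by
  wlog hxy : x ≤ y generalizing x y
  · simpa using (this hy hx (le_of_not_ge hxy)).neg
  rw [hasSum_iff_tendsto_nat_of_nonneg fun n => by rw [sub_nonneg]; gcongr]
  have hlim := ((tendsto_digamma_natCast_add_sub hx.le).sub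
    (tendsto_digamma_natCast_add_sub hy.le)).add_const (digamma y - digamma x)
  rw [sub_zero, zero_add] at hlim
  refine hlim.congr fun N => ?_
  rw [add_comm (N : ℝ) x, add_comm (N : ℝ) y, digamma_add_natCast hx, digamma_add_natCast hy,
    Finset.sum_sub_distrib]
  ring

lemma summable_one_div_add_natCast_sq {x : ℝ} (hx : 0 < x) :
    Summable fun n : ℕ => 1 / (x + n) ^ 2 := by
  refine ((summable_one_div_nat_add_rpow x 2).2 one_lt_two).congr fun n => ?_
  rw [abs_of_pos (by positivity), rpow_two, add_comm]

lemma hasDerivAt_digamma {x : ℝ} (hx : 0 < x) :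
    HasDerivAt digamma (∑' n : ℕ, 1 / (x + n) ^ 2) x := by
  have hhalf : 0 < x / 2 := half_pos hx
  have hterm : ∀ (n : ℕ), ∀ y ∈ Ioi (x / 2),
      HasDerivAt (fun y : ℝ => 1 / (x + n) - 1 / (y + n)) (1 / (y + n) ^ 2) y := by
    intro n y hy
    have hy0 : y + n ≠ 0 := (add_pos_of_pos_of_nonneg (hhalf.trans hy) n.cast_nonneg).ne'
    simpa [one_div, neg_div] using (((hasDerivAt_id y).add_const (n : ℝ)).fun_inv hy0).const_sub
      (1 / (x + n))
  have hbound : ∀ (n : ℕ), ∀ y ∈ Ioi (x / 2), ‖1 / (y + n) ^ 2‖ ≤ 1 / (x / 2 + n) ^ 2 := by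
    intro n y hy
    have hy' : x / 2 < y := hy
    rw [norm_of_nonneg (by positivity)]
    gcongr
  have htsum := hasDerivAt_tsum_of_isPreconnected (summable_one_div_add_natCast_sq hhalf)
    isOpen_Ioi isPreconnected_Ioi hterm hbound (half_lt_self hx)
    (hasSum_digamma_sub hx hx).summable (half_lt_self hx)
  refine (htsum.const_add (digamma x)).congr_of_eventuallyEq ?_
  filter_upwards [lt_mem_nhds hx] with y hy
  rw [(hasSum_digamma_sub hx hy).tsum_eq, add_sub_cancel]

lemma hasSum_trigamma {x : ℝ} (hx : 0 < x) :
    HasSum (fun n : ℕ => 1 / (x + n) ^ 2) (trigamma x) := by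
  rw [trigamma, (hasDerivAt_digamma hx).deriv]
  exact (summable_one_div_add_natCast_sq hx).hasSum

lemma hasSum_alternating_one_div_sq {p w : ℝ} (hp : 0 < p) (hw : 0 < w) :
    HasSum (fun k : ℕ => (-1) ^ k / (p + w * k) ^ 2)
      ((trigamma (p / (2 * w)) - trigamma ((p + w) / (2 * w))) / (2 * w) ^ 2) := by
  rw [sub_div, sub_eq_add_neg, ← neg_div]
  refine HasSum.even_add_odd ?_ ?_
  · refine ((hasSum_trigamma (x := p / (2 * w)) (by positivity)).div_const _).congr_fun fun k => ?_
    have hk : p / (2 * w) + k = (p + w * (2 * k : ℕ)) / (2 * w) := by push_cast; field_simp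
    rw [hk, div_pow, one_div_div, div_div_cancel_left' (by positivity), pow_mul, neg_one_sq,
      one_pow, one_div]
  · refine ((hasSum_trigamma (x := (p + w) / (2 * w)) (by positivity)).neg.div_const _).congr_fun
      fun k => ?_
    have hk : (p + w) / (2 * w) + k = (p + w * (2 * k + 1 : ℕ)) / (2 * w) := by
      push_cast; field_simp; ring
    rw [hk, div_pow, one_div_div, neg_div, div_div_cancel_left' (by positivity), pow_succ, pow_mul,
      neg_one_sq, one_pow, one_mul, neg_div, one_div]

end Digamma

section PowerLogIntegral

lemma rpow_mul_log_nonpos {x : ℝ} (hx : x ∈ Ioo (0 : ℝ) 1) (s : ℝ) : x ^ s * log x ≤ 0 :=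
  mul_nonpos_of_nonneg_of_nonpos (rpow_nonneg hx.1.le _) (log_nonpos hx.1.le hx.2.le)

lemma integral_rpow_sub_one_mul_log {p : ℝ} (hp : 0 < p) :
    ∫ x in Ioo (0 : ℝ) 1, x ^ (p - 1) * log x = -(1 / p ^ 2) := by
  have hpow : Continuous fun x : ℝ => x ^ p := continuous_rpow_const hp.le
  have hcont : ContinuousOn (fun x : ℝ => (x ^ p + negMulLog (x ^ p)) / p ^ 2) (Icc 0 1) :=
    ((hpow.add (continuous_negMulLog.comp hpow)).div_const _).continuousOn
  have hderiv : ∀ x ∈ Ioo (0 : ℝ) 1, HasDerivAt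
      (fun x : ℝ => (x ^ p + negMulLog (x ^ p)) / p ^ 2) (-(x ^ (p - 1) * log x)) x := by
    intro x hx
    have hrpow := hasDerivAt_rpow_const (p := p) (Or.inl hx.1.ne')
    have hcomp := (hasDerivAt_negMulLog (rpow_pos_of_pos hx.1 p).ne').comp x hrpow
    refine ((hrpow.add hcomp).div_const (p ^ 2)).congr_deriv ?_
    rw [log_rpow hx.1]
    field_simp
    ring
  have hint := intervalIntegral.integrableOn_deriv_of_nonneg hcont hderiv
    fun x hx => neg_nonneg.2 (rpow_mul_log_nonpos hx _)
  have hftc := intervalIntegral.integral_eq_sub_of_hasDerivAt_of_le zero_le_one hcont hderiv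
    ((intervalIntegrable_iff_integrableOn_Ioc_of_le zero_le_one).2 hint)
  rw [intervalIntegral.integral_neg, intervalIntegral.integral_of_le zero_le_one,
    integral_Ioc_eq_integral_Ioo] at hftc
  simpa [hp.ne', neg_eq_iff_eq_neg] using hftc

lemma integrableOn_rpow_sub_one_mul_log {p : ℝ} (hp : 0 < p) :
    IntegrableOn (fun x : ℝ => x ^ (p - 1) * log x) (Ioo 0 1) :=
  .of_integral_ne_zero <| by
    rw [integral_rpow_sub_one_mul_log hp]
    exact neg_ne_zero.2 (by positivity)

lemma integrableOn_rpow_mul_log_div_rpow_add_one {p : ℝ} (hp : 0 < p) (w : ℝ) :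
    IntegrableOn (fun x : ℝ => x ^ (p - 1) * log x / (x ^ w + 1)) (Ioo 0 1) := by
  simp_rw [div_eq_mul_inv]
  refine (integrableOn_rpow_sub_one_mul_log hp).mul_bdd (c := 1) (by fun_prop) ?_
  filter_upwards [ae_restrict_mem measurableSet_Ioo] with x hx
  have hxw := rpow_nonneg hx.1.le w
  rw [norm_of_nonneg (by positivity)]
  exact inv_le_one_of_one_le₀ (by linarith)

lemma hasSum_rpow_mul_log_div_rpow_add_one {p w x : ℝ} (hw : 0 < w) (hx : x ∈ Ioo (0 : ℝ) 1) :
    HasSum (fun k : ℕ => (-1) ^ k * (x ^ (p + w * k - 1) * log x))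
      (x ^ (p - 1) * log x / (x ^ w + 1)) := by
  have hxw : ‖-x ^ w‖ < 1 := by
    rw [norm_neg, norm_of_nonneg (rpow_nonneg hx.1.le w)]
    exact rpow_lt_one hx.1.le hx.2 hw
  have hgeom := (hasSum_geometric_of_norm_lt_one hxw).mul_left (x ^ (p - 1) * log x)
  rw [sub_neg_eq_add, add_comm, ← div_eq_mul_inv] at hgeom
  refine hgeom.congr_fun fun k => ?_
  rw [add_sub_right_comm, rpow_add hx.1, rpow_mul hx.1.le, rpow_natCast, neg_pow (x ^ w)]
  ring

lemma integral_rpow_mul_log_div_rpow_add_one {p w : ℝ} (hp : 0 < p) (hw : 0 < w) :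
    ∫ x in Ioo (0 : ℝ) 1, x ^ (p - 1) * log x / (x ^ w + 1) =
      (trigamma ((p + w) / (2 * w)) - trigamma (p / (2 * w))) / (2 * w) ^ 2 := by
  have hexp : ∀ k : ℕ, 0 < p + w * k := fun k => by positivity
  have hterm : ∀ k : ℕ, ∫ x in Ioo (0 : ℝ) 1, (-1) ^ k * (x ^ (p + w * k - 1) * log x) =
      -((-1) ^ k / (p + w * k) ^ 2) := fun k => by
    rw [integral_const_mul, integral_rpow_sub_one_mul_log (hexp k)]
    ring
  have hnorm : ∀ k : ℕ, ∫ x in Ioo (0 : ℝ) 1, ‖(-1) ^ k * (x ^ (p + w * k - 1) * log x)‖ =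
      1 / (p + w * k) ^ 2 := fun k => by
    rw [← neg_neg (1 / (p + w * k) ^ 2), ← integral_rpow_sub_one_mul_log (hexp k), ← integral_neg]
    refine setIntegral_congr_fun measurableSet_Ioo fun x hx => ?_
    simp only [norm_mul, norm_pow, norm_neg, norm_one, one_pow, one_mul]
    rw [← norm_mul, norm_of_nonpos (rpow_mul_log_nonpos hx _)]
  have hsum := hasSum_integral_of_summable_integral_norm
    (F := fun (k : ℕ) x => (-1) ^ k * (x ^ (p + w * k - 1) * log x))
    (fun k => (integrableOn_rpow_sub_one_mul_log (hexp k)).const_mul ((-1) ^ k))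
    (by simp_rw [hnorm]; simpa using (hasSum_alternating_one_div_sq hp hw).summable.norm)
  rw [setIntegral_congr_fun measurableSet_Ioo fun x hx =>
    (hasSum_rpow_mul_log_div_rpow_add_one hw hx).tsum_eq] at hsum
  simp_rw [hterm] at hsum
  rw [hsum.unique (hasSum_alternating_one_div_sq hp hw).neg]
  ring

end PowerLogIntegral

section ChangeOfVariables

variable {E : Type*} [NormedAddCommGroup E] [NormedSpace ℝ E]

lemma image_div_one_sub_Ioo : (fun x : ℝ => x / (1 - x)) '' Ioo 0 1 = Ioi 0 := by
  ext t
  constructor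
  · rintro ⟨x, ⟨hx0, hx1⟩, rfl⟩
    exact div_pos hx0 (sub_pos.2 hx1)
  · intro (ht : 0 < t)
    refine ⟨t / (1 + t), ⟨by positivity, (div_lt_one (by positivity)).2 (by linarith)⟩, ?_⟩
    field_simp
    ring

lemma integral_Ioi_eq_integral_Ioo_div_one_sub (f : ℝ → E) :
    ∫ t in Ioi 0, f t = ∫ x in Ioo (0 : ℝ) 1, (1 / (1 - x) ^ 2) • f (x / (1 - x)) := by
  have hderiv : ∀ x ∈ Ioo (0 : ℝ) 1,
      HasDerivWithinAt (fun x : ℝ => x / (1 - x)) (1 / (1 - x) ^ 2) (Ioo 0 1) x := fun x hx =>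
    (((hasDerivAt_id x).fun_div ((hasDerivAt_id x).const_sub 1) (sub_pos.2 hx.2).ne').congr_deriv
      (by simp)).hasDerivWithinAt
  have hmono : MonotoneOn (fun x : ℝ => x / (1 - x)) (Ioo 0 1) := fun x hx y hy hxy =>
    div_le_div₀ hy.1.le hxy (sub_pos.2 hy.2) (by linarith)
  rw [← image_div_one_sub_Ioo,
    integral_image_eq_integral_deriv_smul_of_monotoneOn measurableSet_Ioo hderiv hmono]

lemma integral_Ioi_one_eq_integral_Ioo_comp_inv (f : ℝ → E) :
    ∫ x in Ioi 1, f x = ∫ x in Ioo (0 : ℝ) 1, (x ^ 2)⁻¹ • f x⁻¹ := by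
  have h := integral_image_eq_integral_abs_deriv_smul (s := Ioo (0 : ℝ) 1) measurableSet_Ioo
    (fun x hx => (hasDerivAt_inv hx.1.ne').hasDerivWithinAt) inv_injective.injOn f
  simpa [inv_Ioo_0_left] using h

lemma integrableOn_Ioi_one_comp_inv_iff (f : ℝ → E) :
    IntegrableOn f (Ioi 1) ↔ IntegrableOn (fun x : ℝ => (x ^ 2)⁻¹ • f x⁻¹) (Ioo 0 1) := by
  have h := integrableOn_image_iff_integrableOn_abs_deriv_smul (s := Ioo (0 : ℝ) 1)
    measurableSet_Ioo (fun x hx => (hasDerivAt_inv hx.1.ne').hasDerivWithinAt) inv_injective.injOn f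
  simpa [inv_Ioo_0_left] using h

lemma integrableOn_Ioo_add_comp_inv {f : ℝ → E} (hf : IntegrableOn f (Ioi 0)) :
    IntegrableOn (fun x : ℝ => f x + (x ^ 2)⁻¹ • f x⁻¹) (Ioo 0 1) :=
  (hf.mono_set Ioo_subset_Ioi_self).add
    ((integrableOn_Ioi_one_comp_inv_iff f).1 (hf.mono_set (Ioi_subset_Ioi zero_le_one)))

lemma integral_Ioi_zero_eq_integral_Ioo_add_comp_inv {f : ℝ → E} (hf : IntegrableOn f (Ioi 0)) :
    ∫ x in Ioi 0, f x = ∫ x in Ioo (0 : ℝ) 1, (f x + (x ^ 2)⁻¹ • f x⁻¹) := by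
  have hle : IntegrableOn f (Ioc 0 1) := hf.mono_set Ioc_subset_Ioi_self
  have hgt : IntegrableOn f (Ioi 1) := hf.mono_set (Ioi_subset_Ioi zero_le_one)
  rw [← Ioc_union_Ioi_eq_Ioi zero_le_one,
    setIntegral_union (Ioc_disjoint_Ioi le_rfl) measurableSet_Ioi hle hgt,
    integral_Ioc_eq_integral_Ioo, integral_Ioi_one_eq_integral_Ioo_comp_inv,
    integral_add (hle.mono_set Ioo_subset_Ioc_self) ((integrableOn_Ioi_one_comp_inv_iff f).1 hgt)]

end ChangeOfVariables

section BetaIntegral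

variable {s c : ℝ}

lemma integral_rpow_mul_one_sub_rpow {b : ℝ} (hs : 0 < s) (hb : 0 < b) :
    ∫ x in Ioo (0 : ℝ) 1, x ^ (s - 1) * (1 - x) ^ (b - 1) =
      Gamma s * Gamma b / Gamma (s + b) := by
  have hbeta := Complex.betaIntegral_eq_Gamma_mul_div (s : ℂ) (b : ℂ) (by simpa) (by simpa)
  have hofReal : EqOn (fun x : ℝ => (x : ℂ) ^ ((s : ℂ) - 1) * (1 - (x : ℂ)) ^ ((b : ℂ) - 1))
      (fun x : ℝ => ((x ^ (s - 1) * (1 - x) ^ (b - 1) : ℝ) : ℂ)) (Ioo 0 1) := fun x hx => by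
    push_cast [Complex.ofReal_cpow hx.1.le, Complex.ofReal_cpow (sub_pos.2 hx.2).le]
    rfl
  rw [Complex.betaIntegral, intervalIntegral.integral_of_le zero_le_one,
    integral_Ioc_eq_integral_Ioo, setIntegral_congr_fun measurableSet_Ioo hofReal,
    integral_complex_ofReal, ← Complex.ofReal_add] at hbeta
  simp only [Complex.Gamma_ofReal] at hbeta
  exact_mod_cast hbeta

lemma integral_rpow_mul_one_add_rpow_neg (hs : 0 < s) (hsc : s < c) :
    ∫ t in Ioi (0 : ℝ), t ^ (s - 1) * (1 + t) ^ (-c) = Gamma s * Gamma (c - s) / Gamma c := by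
  rw [integral_Ioi_eq_integral_Ioo_div_one_sub]
  have h := integral_rpow_mul_one_sub_rpow hs (sub_pos.2 hsc)
  rw [add_sub_cancel] at h
  rw [← h]
  refine setIntegral_congr_fun measurableSet_Ioo fun x hx => ?_
  have hx1 : 0 < 1 - x := sub_pos.2 hx.2
  have hadd : 1 + x / (1 - x) = (1 - x)⁻¹ := by field_simp; ring
  have hexp : c - s - 1 = c - (s - 1) - 2 := by ring
  simp only [smul_eq_mul]
  rw [hadd, div_rpow hx.1.le hx1.le, inv_rpow hx1.le, rpow_neg hx1.le, inv_inv, hexp,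
    rpow_sub hx1 _ 2, rpow_sub hx1 c, rpow_two]
  ring

lemma integrableOn_rpow_mul_one_add_rpow_neg (hs : 0 < s) (hsc : s < c) :
    IntegrableOn (fun t : ℝ => t ^ (s - 1) * (1 + t) ^ (-c)) (Ioi 0) :=
  .of_integral_ne_zero <| by
    rw [integral_rpow_mul_one_add_rpow_neg hs hsc]
    exact (div_pos (mul_pos (Gamma_pos_of_pos hs) (Gamma_pos_of_pos (sub_pos.2 hsc)))
      (Gamma_pos_of_pos (hs.trans hsc))).ne'

lemma one_add_rpow_neg_mul_log_le {t d ε : ℝ} (ht : 0 ≤ t) (hε : 0 < ε) :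
    (1 + t) ^ (-d) * log (1 + t) ≤ (1 + t) ^ (-(d - ε)) / ε := by
  have hpos : 0 < 1 + t := by linarith
  calc (1 + t) ^ (-d) * log (1 + t) ≤ (1 + t) ^ (-d) * ((1 + t) ^ ε / ε) := by
        gcongr
        exact log_le_rpow_div hpos.le hε
    _ = (1 + t) ^ (-(d - ε)) / ε := by
        rw [← mul_div_assoc, ← rpow_add hpos, neg_sub, neg_add_eq_sub]

lemma hasDerivAt_integral_rpow_mul_one_add_rpow_neg (hs : 0 < s) (hsc : s < c) :
    IntegrableOn (fun t : ℝ => t ^ (s - 1) * -((1 + t) ^ (-c) * log (1 + t))) (Ioi 0) ∧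
      HasDerivAt (fun c => ∫ t in Ioi (0 : ℝ), t ^ (s - 1) * (1 + t) ^ (-c))
        (∫ t in Ioi (0 : ℝ), t ^ (s - 1) * -((1 + t) ^ (-c) * log (1 + t))) c := by
  obtain ⟨d, hsd, hdc⟩ := exists_between hsc
  obtain ⟨e, hse, hed⟩ := exists_between hsd
  refine hasDerivAt_integral_of_dominated_loc_of_deriv_le (s := Ioi d)
    (F := fun c t => t ^ (s - 1) * (1 + t) ^ (-c))
    (F' := fun c t => t ^ (s - 1) * -((1 + t) ^ (-c) * log (1 + t)))
    (bound := fun t => t ^ (s - 1) * (1 + t) ^ (-e) / (d - e)) (Ioi_mem_nhds hdc)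
    (Eventually.of_forall fun _ => Measurable.aestronglyMeasurable (by fun_prop))
    (integrableOn_rpow_mul_one_add_rpow_neg hs hsc)
    (Measurable.aestronglyMeasurable (by fun_prop)) ?_
    ((integrableOn_rpow_mul_one_add_rpow_neg hs hse).div_const _) ?_
  all_goals
    filter_upwards [ae_restrict_mem measurableSet_Ioi] with t (ht : 0 < t) c' (hc' : d < c')
  · have hlog : 0 ≤ log (1 + t) := log_nonneg (by linarith)
    have hbound := one_add_rpow_neg_mul_log_le (d := d) ht.le (sub_pos.2 hed)
    rw [sub_sub_cancel] at hbound
    rw [norm_mul, norm_neg, norm_of_nonneg (by positivity), norm_of_nonneg (by positivity),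
      mul_div_assoc]
    gcongr
    refine le_trans ?_ hbound
    gcongr
    linarith
  · refine HasDerivAt.const_mul _ ?_
    refine ((hasDerivAt_neg c').const_rpow (by linarith : 0 < 1 + t)).congr_deriv ?_
    ring

lemma integrableOn_rpow_mul_one_add_rpow_neg_mul_log (hs : 0 < s) (hsc : s < c) :
    IntegrableOn (fun t : ℝ => t ^ (s - 1) * ((1 + t) ^ (-c) * log (1 + t))) (Ioi 0) := by
  simpa [IntegrableOn] using (hasDerivAt_integral_rpow_mul_one_add_rpow_neg hs hsc).1.neg

lemma integral_rpow_mul_one_add_rpow_neg_mul_log (hs : 0 < s) (hsc : s < c) :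
    ∫ t in Ioi (0 : ℝ), t ^ (s - 1) * ((1 + t) ^ (-c) * log (1 + t)) =
      Gamma s * Gamma (c - s) / Gamma c * (digamma c - digamma (c - s)) := by
  have hΓc := (Gamma_pos_of_pos (hs.trans hsc)).ne'
  have hderiv := (((hasDerivAt_Gamma_of_pos (sub_pos.2 hsc)).comp_sub_const c s).const_mul
    (Gamma s)).fun_div (hasDerivAt_Gamma_of_pos (hs.trans hsc)) hΓc
  have heq : (fun c => ∫ t in Ioi (0 : ℝ), t ^ (s - 1) * (1 + t) ^ (-c)) =ᶠ[𝓝 c]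
      fun c => Gamma s * Gamma (c - s) / Gamma c := by
    filter_upwards [lt_mem_nhds hsc] with c' hc'
      using integral_rpow_mul_one_add_rpow_neg hs hc'
  have hunique := (hasDerivAt_integral_rpow_mul_one_add_rpow_neg hs hsc).2.unique
    (hderiv.congr_of_eventuallyEq heq)
  simp only [mul_neg, integral_neg] at hunique
  rw [← neg_inj, hunique]
  field_simp
  ring

end BetaIntegral

section GeometricSeries

variable {α 𝕜 : Type*} {m : MeasurableSpace α} {μ : Measure α} [RCLike 𝕜] {r f : α → 𝕜} {ρ : ℝ}

lemma integrable_inv_one_sub_mul (hρ : ρ < 1) (hr : AEStronglyMeasurable r μ)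
    (hrρ : ∀ᵐ x ∂μ, ‖r x‖ ≤ ρ) (hf : Integrable f μ) :
    Integrable (fun x => (1 - r x)⁻¹ * f x) μ := by
  refine hf.bdd_mul (c := (1 - ρ)⁻¹) (by fun_prop) ?_
  filter_upwards [hrρ] with x hx
  have hsub : 1 - ρ ≤ ‖1 - r x‖ := by
    have := norm_sub_norm_le 1 (r x)
    rw [norm_one] at this
    linarith
  rw [norm_inv]
  exact inv_anti₀ (sub_pos.2 hρ) hsub

lemma hasSum_integral_pow_mul (hρ₀ : 0 ≤ ρ) (hρ : ρ < 1) (hr : AEStronglyMeasurable r μ)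
    (hrρ : ∀ᵐ x ∂μ, ‖r x‖ ≤ ρ) (hf : Integrable f μ) :
    HasSum (fun n : ℕ => ∫ x, r x ^ n * f x ∂μ) (∫ x, (1 - r x)⁻¹ * f x ∂μ) := by
  have hpow : ∀ n : ℕ, ∀ᵐ x ∂μ, ‖r x ^ n‖ ≤ ρ ^ n := fun n => by
    filter_upwards [hrρ] with x hx
    rw [norm_pow]
    gcongr
  have hint : ∀ n : ℕ, Integrable (fun x => r x ^ n * f x) μ := fun n =>
    hf.bdd_mul (hr.pow n) (hpow n)
  have hsummable : Summable fun n : ℕ => ∫ x, ‖r x ^ n * f x‖ ∂μ := by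
    refine .of_nonneg_of_le (fun n => integral_nonneg fun x => norm_nonneg _) (fun n => ?_)
      ((summable_geometric_of_lt_one hρ₀ hρ).mul_right (∫ x, ‖f x‖ ∂μ))
    rw [← integral_const_mul]
    refine integral_mono_ae (hint n).norm (hf.norm.const_mul _) ?_
    filter_upwards [hpow n] with x hx
    rw [norm_mul]
    gcongr
  have htsum : ∀ᵐ x ∂μ, ∑' n : ℕ, r x ^ n * f x = (1 - r x)⁻¹ * f x := by
    filter_upwards [hrρ] with x hx
    exact ((hasSum_geometric_of_norm_lt_one (hx.trans_lt hρ)).mul_right (f x)).tsum_eq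
  rw [← integral_congr_ae htsum]
  exact hasSum_integral_of_summable_integral_norm hint hsummable

end GeometricSeries

section HalfLine

variable {a : ℝ}

lemma ae_norm_three_mul_div_one_add_sq_le :
    ∀ᵐ t ∂volume.restrict (Ioi (0 : ℝ)), ‖3 * t / (1 + t) ^ 2‖ ≤ 3 / 4 := by
  filter_upwards [ae_restrict_mem measurableSet_Ioi] with t (ht : 0 < t)
  rw [norm_of_nonneg (by positivity), div_le_div_iff₀ (by positivity) (by norm_num)]
  nlinarith [sq_nonneg (1 - t)]

lemma inv_one_sub_mul_rpow_mul_log {t : ℝ} (ht : 0 < t) :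
    (1 - 3 * t / (1 + t) ^ 2)⁻¹ * (t ^ (a - 1) * ((1 + t) ^ (-3 : ℝ) * log (1 + t))) =
      t ^ (a - 1) * log (1 + t) / (1 + t ^ 3) := by
  have hpos : 0 < 1 + t := by positivity
  have hfactor : 1 - 3 * t / (1 + t) ^ 2 = (1 + t ^ 3) / (1 + t) ^ 3 := by
    field_simp
    ring
  rw [hfactor, inv_div, rpow_neg hpos.le]
  norm_cast
  field_simp

lemma integrableOn_rpow_mul_log_one_add_div (ha : 0 < a) (ha3 : a < 3) :
    IntegrableOn (fun t : ℝ => t ^ (a - 1) * log (1 + t) / (1 + t ^ 3)) (Ioi 0) :=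
  IntegrableOn.congr_fun (integrable_inv_one_sub_mul (by norm_num)
    (Measurable.aestronglyMeasurable (by fun_prop)) ae_norm_three_mul_div_one_add_sq_le
    (integrableOn_rpow_mul_one_add_rpow_neg_mul_log ha ha3))
    (fun _ ht => inv_one_sub_mul_rpow_mul_log ht) measurableSet_Ioi

lemma integral_pow_mul_rpow_mul_log_one_add (ha : 0 < a) (ha3 : a < 3) (n : ℕ) :
    ∫ t in Ioi (0 : ℝ), (3 * t / (1 + t) ^ 2) ^ n *
        (t ^ (a - 1) * ((1 + t) ^ (-3 : ℝ) * log (1 + t))) =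
      3 ^ n * Gamma (n + 3 - a) * Gamma (n + a) / (Nat.factorial (2 * n + 2)) *
        (digamma (2 * n + 3) - digamma (n + 3 - a)) := by
  have hs : 0 < n + a := by positivity
  have hsc : n + a < 2 * n + 3 := by linarith [n.cast_nonneg (α := ℝ)]
  have hsub : (2 * n + 3 : ℝ) - (n + a) = n + 3 - a := by ring
  have hfactorial : Gamma (2 * n + 3) = Nat.factorial (2 * n + 2) := by
    rw [← Gamma_nat_eq_factorial]
    push_cast
    ring_nf
  have hlog := integral_rpow_mul_one_add_rpow_neg_mul_log hs hsc
  rw [hsub, hfactorial] at hlog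
  calc _ = ∫ t in Ioi (0 : ℝ),
        3 ^ n * (t ^ (n + a - 1) * ((1 + t) ^ (-(2 * n + 3 : ℝ)) * log (1 + t))) := by
        refine setIntegral_congr_fun measurableSet_Ioi fun t (ht : 0 < t) => ?_
        have hpos : 0 < 1 + t := by positivity
        have hpow : (1 + t) ^ (-(2 * n + 3 : ℝ)) = ((1 + t) ^ (2 * n) * (1 + t) ^ 3)⁻¹ := by
          rw [rpow_neg hpos.le, ← pow_add]
          norm_cast
        have hcube : (1 + t) ^ (-3 : ℝ) = ((1 + t) ^ 3)⁻¹ := by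
          rw [rpow_neg hpos.le]
          norm_cast
        rw [hpow, hcube, mul_inv, add_sub_assoc, rpow_add ht, rpow_natCast, pow_mul, div_pow,
          mul_pow]
        ring
    _ = _ := by
        rw [integral_const_mul, hlog]
        ring

lemma hasSum_integral_rpow_mul_log_one_add_div (ha : 0 < a) (ha3 : a < 3) :
    HasSum (fun n : ℕ => 3 ^ n * Gamma (n + 3 - a) * Gamma (n + a) / (Nat.factorial (2 * n + 2)) *
        (digamma (2 * n + 3) - digamma (n + 3 - a)))
      (∫ t in Ioi (0 : ℝ), t ^ (a - 1) * log (1 + t) / (1 + t ^ 3)) := by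
  rw [← setIntegral_congr_fun measurableSet_Ioi fun _ ht => inv_one_sub_mul_rpow_mul_log ht]
  simp_rw [← integral_pow_mul_rpow_mul_log_one_add ha ha3]
  exact hasSum_integral_pow_mul (by norm_num) (by norm_num)
    (Measurable.aestronglyMeasurable (by fun_prop)) ae_norm_three_mul_div_one_add_sq_le
    (integrableOn_rpow_mul_one_add_rpow_neg_mul_log ha ha3)

end HalfLine

section Folding

variable {q : ℝ}

lemma rpow_one_div_smul_log_rpow_add_one_div (hq : q ≠ 0) {t : ℝ} (ht : 0 < t) :
    (|1 / q| * t ^ (1 / q - 1)) •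
        (log ((t ^ (1 / q)) ^ q + 1) / ((t ^ (1 / q)) ^ (3 * q) + 1)) =
      |1 / q| * (t ^ (1 / q - 1) * log (1 + t) / (1 + t ^ 3)) := by
  have hcube : 1 / q * (3 * q) = (3 : ℕ) := by field_simp; norm_num
  rw [← rpow_mul ht.le, ← rpow_mul ht.le, one_div_mul_cancel hq, hcube, rpow_one, rpow_natCast,
    smul_eq_mul, add_comm t, add_comm (t ^ 3), mul_assoc, mul_div_assoc]

lemma integrableOn_log_rpow_add_one_div (hq : 1 / 3 < q) :
    IntegrableOn (fun x : ℝ => log (x ^ q + 1) / (x ^ (3 * q) + 1)) (Ioi 0) := by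
  have hq0 : 0 < q := by linarith
  rw [← integrableOn_Ioi_comp_rpow_iff _ (one_div_ne_zero hq0.ne'),
    integrableOn_congr_fun (fun t (ht : t ∈ Ioi 0) =>
      rpow_one_div_smul_log_rpow_add_one_div hq0.ne' ht) measurableSet_Ioi]
  exact (integrableOn_rpow_mul_log_one_add_div (by positivity)
    ((one_div_lt hq0 three_pos).2 hq)).const_mul _

lemma integral_log_rpow_add_one_div (hq : q ≠ 0) :
    ∫ x in Ioi (0 : ℝ), log (x ^ q + 1) / (x ^ (3 * q) + 1) =
      |1 / q| * ∫ t in Ioi (0 : ℝ), t ^ (1 / q - 1) * log (1 + t) / (1 + t ^ 3) := by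
  rw [← integral_comp_rpow_Ioi _ (one_div_ne_zero hq), setIntegral_congr_fun measurableSet_Ioi
    fun t ht => rpow_one_div_smul_log_rpow_add_one_div hq ht, integral_const_mul]

lemma log_rpow_add_one_div_add_comp_inv (q : ℝ) {x : ℝ} (hx : 0 < x) :
    log (x ^ q + 1) / (x ^ (3 * q) + 1) +
        (x ^ 2)⁻¹ • (log (x⁻¹ ^ q + 1) / (x⁻¹ ^ (3 * q) + 1)) =
      (x ^ (3 * q - 2) + 1) * log (x ^ q + 1) / (x ^ (3 * q) + 1) -
        q * (x ^ (3 * q - 1 - 1) * log x / (x ^ (3 * q) + 1)) := by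
  have hxq := rpow_pos_of_pos hx q
  have hlog : log ((x ^ q)⁻¹ + 1) = log (x ^ q + 1) - q * log x := by
    rw [← log_rpow hx, ← log_div (by positivity) hxq.ne']
    congr 1
    field_simp
    ring
  have hexp : 3 * q - 1 - 1 = 3 * q - 2 := by ring
  rw [inv_rpow hx.le, inv_rpow hx.le, hlog, hexp, rpow_sub hx _ 2, rpow_two, smul_eq_mul]
  field_simp
  ring

lemma integral_Ioo_log_rpow_eq (hq : 1 / 3 < q) :
    ∫ x in Ioo (0 : ℝ) 1, (x ^ (3 * q - 2) + 1) * log (x ^ q + 1) / (x ^ (3 * q) + 1) =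
      q * (∫ x in Ioo (0 : ℝ) 1, x ^ (3 * q - 1 - 1) * log x / (x ^ (3 * q) + 1)) +
        ∫ x in Ioi (0 : ℝ), log (x ^ q + 1) / (x ^ (3 * q) + 1) := by
  have hfold : EqOn (fun x : ℝ => log (x ^ q + 1) / (x ^ (3 * q) + 1) +
        (x ^ 2)⁻¹ • (log (x⁻¹ ^ q + 1) / (x⁻¹ ^ (3 * q) + 1)))
      (fun x => (x ^ (3 * q - 2) + 1) * log (x ^ q + 1) / (x ^ (3 * q) + 1) -
        q * (x ^ (3 * q - 1 - 1) * log x / (x ^ (3 * q) + 1))) (Ioo 0 1) :=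
    fun x hx => log_rpow_add_one_div_add_comp_inv q hx.1
  have hint := integrableOn_log_rpow_add_one_div hq
  have hpowlog := (integrableOn_rpow_mul_log_div_rpow_add_one (p := 3 * q - 1) (by linarith)
    (3 * q)).const_mul q
  rw [integral_Ioi_zero_eq_integral_Ioo_add_comp_inv hint,
    setIntegral_congr_fun measurableSet_Ioo hfold, ← integral_const_mul, ← integral_add hpowlog
      ((integrableOn_Ioo_add_comp_inv hint).congr_fun hfold measurableSet_Ioo)]
  simp only [add_sub_cancel]

end Folding

theorem integral_log_rpow_half_three_general (q : ℝ) (hq : 1 / 3 < q) :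
    (∫ x in (0:ℝ)..1, (x ^ (3 * q - 2) + 1) * Real.log (x ^ q + 1) / (x ^ (3 * q) + 1)) =
      (1 / (36 * q)) * (trigamma ((6 * q - 1) / (6 * q)) - trigamma ((3 * q - 1) / (6 * q)))
      + (1 / q) * ∑' n : ℕ,
          (3 : ℝ) ^ n * Real.Gamma ((n : ℝ) + 3 - 1 / q) * Real.Gamma ((n : ℝ) + 1 / q)
            / (Nat.factorial (2 * n + 2))
          * (digamma (2 * (n : ℝ) + 3) - digamma ((n : ℝ) + 3 - 1 / q)) := by
  have hq0 : 0 < q := by linarith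
  have ha3 : 1 / q < 3 := (one_div_lt hq0 three_pos).2 hq
  have harg : 3 * q - 1 + 3 * q = 6 * q - 1 := by ring
  have hsix : 2 * (3 * q) = 6 * q := by ring
  have hscale : ∀ A, q * (A / (6 * q) ^ 2) = 1 / (36 * q) * A := fun A => by
    field_simp
    norm_num
  rw [intervalIntegral.integral_of_le zero_le_one, integral_Ioc_eq_integral_Ioo,
    integral_Ioo_log_rpow_eq hq,
    integral_rpow_mul_log_div_rpow_add_one (by linarith) (by positivity), harg, hsix, hscale,
    integral_log_rpow_add_one_div hq0.ne', abs_of_pos (one_div_pos.2 hq0),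
    (hasSum_integral_rpow_mul_log_one_add_div (one_div_pos.2 hq0) ha3).tsum_eq]

theorem integral_log_rpow_half_three (q : ℝ) (hq : 1 / 2 < q) :
    (∫ x in (0:ℝ)..1, (x ^ (3 * q - 2) + 1) * Real.log (x ^ q + 1) / (x ^ (3 * q) + 1)) =
      (1 / (36 * q)) * (trigamma ((6 * q - 1) / (6 * q)) - trigamma ((3 * q - 1) / (6 * q)))
      + (1 / q) * ∑' n : ℕ,
          (3 : ℝ) ^ n * Real.Gamma ((n : ℝ) + 3 - 1 / q) * Real.Gamma ((n : ℝ) + 1 / q)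
            / (Nat.factorial (2 * n + 2))
          * (digamma (2 * (n : ℝ) + 3) - digamma ((n : ℝ) + 3 - 1 / q)) :=
  integral_log_rpow_half_three_general q (by linarith)
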